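/- For symmetric positive definite matrices C₁, C₂ ∈ ℝ^{d×d}, the Gaussian RKHS inclusion 𝓗_{C₁} ⊆ 𝓗_{C₂} holds if and only if C₁² ≥ C₂² in the Loewner order; in that case ‖f‖_{C₂} ≤ (det C₁/det C₂)^{1/2}·‖f‖_{C₁} for all f ∈ 𝓗_{C₁}. -/

import Mathlib

open Matrix

/-- Gaussian kernel on `ℝ^d` with positive definite covariance matrix `C`:
`k^C(x,y) = exp(−(x−y)ᵀ C⁻² (x−y))`. -/
noncomputable def gaussKer {d : ℕ} (C : Matrix (Fin d) (Fin d) ℝ) :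
    (Fin d → ℝ) → (Fin d → ℝ) → ℝ :=
  fun x y => Real.exp (-((x - y) ⬝ᵥ (C⁻¹ ^ 2).mulVec (x - y)))

/-- A reproducing kernel Hilbert space for a kernel `k` on `ℝ^d`: a real Hilbert
space `H` together with an injective linear realization map into functions, feature
vectors `kx` realizing the kernel sections, and the reproducing property. -/
structure RKHSFor (d : ℕ) (k : (Fin d → ℝ) → (Fin d → ℝ) → ℝ) where
  H : Type
  [normedGroup : NormedAddCommGroup H]
  [innerSpace : InnerProductSpace ℝ H]
  [complete : CompleteSpace H]
  toFun : H → (Fin d → ℝ) → ℝ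
  toFun_add : ∀ f g : H, toFun (f + g) = toFun f + toFun g
  toFun_smul : ∀ (c : ℝ) (f : H), toFun (c • f) = c • toFun f
  toFun_injective : Function.Injective toFun
  kx : (Fin d → ℝ) → H
  toFun_kx : ∀ x y, toFun (kx x) y = k x y
  reproducing : ∀ (f : H) (x : Fin d → ℝ),
    @inner ℝ H (InnerProductSpace.toInner) f (kx x) = toFun f x

/-- The Hilbert space norm of an element of an `RKHSFor`. -/
noncomputable def RKHSFor.norm' {d : ℕ} {k : (Fin d → ℝ) → (Fin d → ℝ) → ℝ}
    (R : RKHSFor d k) (f : R.H) : ℝ :=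
  @Norm.norm _ R.normedGroup.toNorm f


attribute [local instance] RKHSFor.normedGroup RKHSFor.innerSpace RKHSFor.complete

lemma dom_of_incl {d : ℕ} {k₁ k₂ : (Fin d → ℝ) → (Fin d → ℝ) → ℝ}
    (H₁ : RKHSFor d k₁) (H₂ : RKHSFor d k₂)
    (h : Set.range H₁.toFun ⊆ Set.range H₂.toFun) :
    ∃ c : ℝ, 0 ≤ c ∧ ∀ (s : Finset ℕ) (b : ℕ → ℝ) (x : ℕ → Fin d → ℝ),
      ‖∑ i ∈ s, b i • H₁.kx (x i)‖ ≤ c * ‖∑ i ∈ s, b i • H₂.kx (x i)‖ := by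
  have h' : ∀ f : H₁.H, ∃ g : H₂.H, H₂.toFun g = H₁.toFun f := fun f => h ⟨f, rfl⟩
  choose J hJ using h'
  let L : H₁.H →ₗ[ℝ] H₂.H :=
    { toFun := J
      map_add' := fun f g => H₂.toFun_injective (by
        rw [H₂.toFun_add, hJ, hJ, hJ, H₁.toFun_add])
      map_smul' := fun c f => H₂.toFun_injective (by
        simp only [RingHom.id_apply]
        rw [H₂.toFun_smul, hJ, hJ, H₁.toFun_smul]) }
  have hL : ∀ f, H₂.toFun (L f) = H₁.toFun f := hJ
  have hc : Continuous L := by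
    refine L.continuous_of_seq_closed_graph fun u x y hu hy => ?_
    apply H₂.toFun_injective
    funext p
    rw [hL, ← H₂.reproducing, ← H₁.reproducing]
    refine tendsto_nhds_unique (hy.inner tendsto_const_nhds)
      ((hu.inner (tendsto_const_nhds (x := H₁.kx p))).congr fun n => ?_)
    simp only [Function.comp]
    rw [H₂.reproducing, hL, H₁.reproducing]
  let T : H₁.H →L[ℝ] H₂.H := ⟨L, hc⟩
  refine ⟨‖T‖, norm_nonneg _, fun s b x => ?_⟩
  set u := ∑ i ∈ s, b i • H₁.kx (x i) with hu
  set w := ∑ i ∈ s, b i • H₂.kx (x i) with hw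
  have key : inner ℝ u u = inner ℝ (T u) w := by
    conv_lhs => rw [hu]
    rw [hw, ← hu, inner_sum, inner_sum]
    refine Finset.sum_congr rfl fun i _ => ?_
    rw [inner_smul_right, inner_smul_right, H₁.reproducing, H₂.reproducing]
    congr 1
    exact (congrFun (hL u) _).symm
  rw [real_inner_self_eq_norm_sq] at key
  have h1 : ‖u‖ ^ 2 ≤ (‖T‖ * ‖u‖) * ‖w‖ := by
    rw [key]
    exact (real_inner_le_norm _ _).trans
      (mul_le_mul_of_nonneg_right (T.le_opNorm u) (norm_nonneg _))
  rcases (norm_nonneg u).eq_or_lt with h0 | h0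
  · rw [← h0]; positivity
  · nlinarith

lemma ext_of_dom {d : ℕ} {k₁ k₂ : (Fin d → ℝ) → (Fin d → ℝ) → ℝ}
    (H₁ : RKHSFor d k₁) (H₂ : RKHSFor d k₂) (c : ℝ) (hc : 0 ≤ c)
    (h : ∀ a : (Fin d → ℝ) →₀ ℝ, ‖Finsupp.linearCombination ℝ H₁.kx a‖ ≤
      c * ‖Finsupp.linearCombination ℝ H₂.kx a‖) (f : H₁.H) :
    ∃ g : H₂.H, H₂.toFun g = H₁.toFun f ∧ ‖g‖ ≤ c * ‖f‖ := by
  set T₁ := Finsupp.linearCombination ℝ H₁.kx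
  set T₂ := Finsupp.linearCombination ℝ H₂.kx with hT₂
  have h0 : ∀ y : LinearMap.range T₂, ∃ a, T₂ a = y := fun y => y.2
  choose σ hσ using h0
  have heq : ∀ a b, T₂ a = T₂ b → T₁ a = T₁ b := by
    intro a b hab
    have := h (a - b)
    rw [map_sub, map_sub, hab, sub_self, norm_zero, mul_zero] at this
    exact sub_eq_zero.1 (norm_le_zero_iff.1 this)
  let ℓ : LinearMap.range T₂ →ₗ[ℝ] ℝ :=
    { toFun := fun y => inner ℝ f (T₁ (σ y))
      map_add' := fun y z => by
        rw [← inner_add_right, ← map_add]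
        congr 1
        apply heq
        rw [hσ, map_add, hσ, hσ]; rfl
      map_smul' := fun r y => by
        simp only [RingHom.id_apply, smul_eq_mul]
        rw [← inner_smul_right, ← map_smul]
        congr 1
        apply heq
        rw [hσ, map_smul, hσ]; rfl }
  have hb : ∀ y, ‖ℓ y‖ ≤ (c * ‖f‖) * ‖y‖ := fun y => by
    calc ‖ℓ y‖ ≤ ‖f‖ * ‖T₁ (σ y)‖ := norm_inner_le_norm _ _
      _ ≤ ‖f‖ * (c * ‖T₂ (σ y)‖) := by gcongr; exact h _
      _ = (c * ‖f‖) * ‖y‖ := by rw [hσ]; simp only [Submodule.coe_norm]; ring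
  obtain ⟨G, hG, hGn⟩ := exists_extension_norm_eq (LinearMap.range T₂) (ℓ.mkContinuous _ hb)
  refine ⟨(InnerProductSpace.toDual ℝ H₂.H).symm G, ?_, ?_⟩
  · funext p
    rw [← H₂.reproducing, InnerProductSpace.toDual_symm_apply, ← H₁.reproducing]
    have hp : T₂ (Finsupp.single p 1) = H₂.kx p := by simp [hT₂]
    have := hG ⟨H₂.kx p, ⟨_, hp⟩⟩
    simp only at this
    rw [this]
    show inner ℝ f (T₁ (σ _)) = _
    congr 1
    rw [heq _ (Finsupp.single p 1) (by rw [hσ, hp])]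
    simp [T₁]
  · rw [LinearIsometryEquiv.norm_map, hGn]
    exact LinearMap.mkContinuous_norm_le _ (by positivity) _

lemma norm_sq_sum {d : ℕ} {k : (Fin d → ℝ) → (Fin d → ℝ) → ℝ}
    (H : RKHSFor d k) {ι : Type*} (s : Finset ι) (b : ι → ℝ) (x : ι → Fin d → ℝ) :
    ‖∑ i ∈ s, b i • H.kx (x i)‖ ^ 2 = ∑ i ∈ s, ∑ j ∈ s, b i * b j * k (x i) (x j) := by
  rw [← real_inner_self_eq_norm_sq, sum_inner]
  refine Finset.sum_congr rfl fun i _ => ?_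
  rw [inner_sum]
  refine Finset.sum_congr rfl fun j _ => ?_
  rw [inner_smul_left, inner_smul_right, H.reproducing, H.toFun_kx]
  simp [mul_assoc]

lemma dot_symm {d : ℕ} {C : Matrix (Fin d) (Fin d) ℝ} (hC : C.PosDef) (x y : Fin d → ℝ) :
    x ⬝ᵥ (C *ᵥ y) = (C *ᵥ x) ⬝ᵥ y := by
  have h : Cᵀ = C := by simpa [conjTranspose_eq_transpose_of_trivial] using hC.isHermitian.eq
  rw [dotProduct_mulVec, ← mulVec_transpose, h]

lemma dot_sq {d : ℕ} {C : Matrix (Fin d) (Fin d) ℝ} (hC : C.PosDef) (x : Fin d → ℝ) :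
    x ⬝ᵥ ((C ^ 2) *ᵥ x) = (C *ᵥ x) ⬝ᵥ (C *ᵥ x) := by
  rw [pow_two, ← mulVec_mulVec, dot_symm hC]

lemma gaussKer_eq {d : ℕ} {C : Matrix (Fin d) (Fin d) ℝ} (hC : C.PosDef) (x y : Fin d → ℝ) :
    gaussKer C x y = Real.exp (-((C⁻¹ *ᵥ (x - y)) ⬝ᵥ (C⁻¹ *ᵥ (x - y)))) := by
  rw [gaussKer, dot_sq hC.inv]

lemma inv_mv {d : ℕ} {C : Matrix (Fin d) (Fin d) ℝ} (hC : C.PosDef) (x : Fin d → ℝ) :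
    C⁻¹ *ᵥ (C *ᵥ x) = x := by
  have := hC.det_pos.ne'
  rw [mulVec_mulVec, nonsing_inv_mul _ (by simpa using this), one_mulVec]

lemma mv_inv {d : ℕ} {C : Matrix (Fin d) (Fin d) ℝ} (hC : C.PosDef) (x : Fin d → ℝ) :
    C *ᵥ (C⁻¹ *ᵥ x) = x := by
  have := hC.det_pos.ne'
  rw [mulVec_mulVec, mul_nonsing_inv _ (by simpa using this), one_mulVec]

lemma posSemidef_iff' {d : ℕ} {C₁ C₂ : Matrix (Fin d) (Fin d) ℝ} (h₁ : C₁.PosDef)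
    (h₂ : C₂.PosDef) : (C₁ ^ 2 - C₂ ^ 2).PosSemidef ↔
      ∀ w, (C₂ *ᵥ w) ⬝ᵥ (C₂ *ᵥ w) ≤ (C₁ *ᵥ w) ⬝ᵥ (C₁ *ᵥ w) := by
  rw [posSemidef_iff_dotProduct_mulVec]
  have : (C₁ ^ 2 - C₂ ^ 2).IsHermitian := (h₁.isHermitian.pow 2).sub (h₂.isHermitian.pow 2)
  simp only [this, true_and, sub_mulVec, dotProduct_sub, star_trivial, dot_sq h₁, dot_sq h₂,
    sub_nonneg]

lemma loewner_of_inv {d : ℕ} {C₁ C₂ : Matrix (Fin d) (Fin d) ℝ} (h₁ : C₁.PosDef)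
    (h₂ : C₂.PosDef)
    (h : ∀ v, (C₁⁻¹ *ᵥ v) ⬝ᵥ (C₁⁻¹ *ᵥ v) ≤ (C₂⁻¹ *ᵥ v) ⬝ᵥ (C₂⁻¹ *ᵥ v)) :
    (C₁ ^ 2 - C₂ ^ 2).PosSemidef := by
  rw [posSemidef_iff' h₁ h₂]
  intro w
  set u := C₂ *ᵥ (C₂ *ᵥ w) with hu
  have e := h u
  have e2 : C₂⁻¹ *ᵥ u = C₂ *ᵥ w := inv_mv h₂ _
  rw [e2] at e
  have e3 : 0 ≤ (C₁ *ᵥ w - C₁⁻¹ *ᵥ u) ⬝ᵥ (C₁ *ᵥ w - C₁⁻¹ *ᵥ u) := by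
    simpa using dotProduct_star_self_nonneg (C₁ *ᵥ w - C₁⁻¹ *ᵥ u)
  have e4 : (C₁ *ᵥ w) ⬝ᵥ (C₁⁻¹ *ᵥ u) = (C₂ *ᵥ w) ⬝ᵥ (C₂ *ᵥ w) := by
    rw [← dot_symm h₁, mv_inv h₁, hu, dot_symm h₂]
  rw [dotProduct_sub, sub_dotProduct, sub_dotProduct, dotProduct_comm (C₁⁻¹ *ᵥ u) (C₁ *ᵥ w), e4]
    at e3
  linarith

open MeasureTheory in
lemma std_ft (d : ℕ) (u : Fin d → ℝ) :
    Integrable (fun v : Fin d → ℝ => Real.cos (u ⬝ᵥ v) * Real.exp (-(v ⬝ᵥ v) / 4)) ∧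
    ∫ v : Fin d → ℝ, Real.cos (u ⬝ᵥ v) * Real.exp (-(v ⬝ᵥ v) / 4) =
      (4 * Real.pi) ^ ((d : ℝ) / 2) * Real.exp (-(u ⬝ᵥ u)) := by
  have hb : 0 < ((1 / 4 : ℝ) : ℂ).re := by simp
  have hi := GaussianFourier.integrable_cexp_neg_mul_sum_add hb
    (fun i : Fin d => Complex.I * (u i : ℂ))
  have hI := GaussianFourier.integral_cexp_neg_mul_sum_add hb
    (fun i : Fin d => Complex.I * (u i : ℂ))
  have hre : ∀ v : Fin d → ℝ, (Complex.exp (-((1 / 4 : ℝ) : ℂ) * ∑ i, (v i : ℂ) ^ 2 +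
      ∑ i, Complex.I * (u i : ℂ) * v i)).re =
      Real.cos (u ⬝ᵥ v) * Real.exp (-(v ⬝ᵥ v) / 4) := by
    intro v
    have : (-((1 / 4 : ℝ) : ℂ) * ∑ i, (v i : ℂ) ^ 2 +
      ∑ i, Complex.I * (u i : ℂ) * v i) =
      ((-(v ⬝ᵥ v) / 4 : ℝ) : ℂ) + ((u ⬝ᵥ v : ℝ) : ℂ) * Complex.I := by
      simp only [dotProduct, mul_assoc, ← Finset.mul_sum]
      push_cast
      simp only [pow_two]
      ring
    rw [this, Complex.exp_add, ← Complex.ofReal_exp, Complex.re_ofReal_mul,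
      Complex.exp_ofReal_mul_I_re, mul_comm]
  have hr := hi.re
  simp only [RCLike.re_to_complex, hre] at hr
  refine ⟨hr, ?_⟩
  have h2 := congrArg Complex.re hI
  rw [← RCLike.re_to_complex, ← integral_re hi] at h2
  simp only [RCLike.re_to_complex, hre] at h2
  rw [h2]
  have e1 : ((Real.pi : ℂ) / ((1 / 4 : ℝ) : ℂ)) ^ ((Fintype.card (Fin d) : ℂ) / 2) =
      (((4 * Real.pi) ^ ((d : ℝ) / 2) : ℝ) : ℂ) := by
    rw [Complex.ofReal_cpow (by positivity)]
    simp only [Fintype.card_fin]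
    push_cast
    congr 1
    ring
  have e2 : (∑ i : Fin d, (Complex.I * (u i : ℂ)) ^ 2) / (4 * ((1 / 4 : ℝ) : ℂ)) =
      ((-(u ⬝ᵥ u) : ℝ) : ℂ) := by
    simp only [dotProduct, mul_pow, Complex.I_sq, ← Finset.mul_sum]
    push_cast
    simp only [pow_two]
    ring
  rw [e1, e2, ← Complex.ofReal_exp, ← Complex.ofReal_mul, Complex.ofReal_re]

open MeasureTheory in
lemma mat_ft {d : ℕ} {C : Matrix (Fin d) (Fin d) ℝ} (hC : C.PosDef) (x : Fin d → ℝ) :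
    Integrable (fun v : Fin d → ℝ => Real.cos (x ⬝ᵥ v) *
      Real.exp (-((C *ᵥ v) ⬝ᵥ (C *ᵥ v)) / 4)) ∧
    C.det * ∫ v : Fin d → ℝ, Real.cos (x ⬝ᵥ v) * Real.exp (-((C *ᵥ v) ⬝ᵥ (C *ᵥ v)) / 4) =
      (4 * Real.pi) ^ ((d : ℝ) / 2) * Real.exp (-((C⁻¹ *ᵥ x) ⬝ᵥ (C⁻¹ *ᵥ x))) := by
  obtain ⟨hi, hI⟩ := std_ft d (C⁻¹ *ᵥ x)
  have hdet := hC.det_pos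
  have hmap := Real.map_matrix_volume_pi_eq_smul_volume_pi hdet.ne'
  have hcont : Continuous (toLin' C) := (toLin' C).continuous_of_finiteDimensional
  set F : (Fin d → ℝ) → ℝ := fun v => Real.cos ((C⁻¹ *ᵥ x) ⬝ᵥ v) * Real.exp (-(v ⬝ᵥ v) / 4)
    with hF
  have hFc : Continuous F := by
    simp only [hF, dotProduct]; fun_prop
  have hcomp : ∀ v, F (toLin' C v) =
      Real.cos (x ⬝ᵥ v) * Real.exp (-((C *ᵥ v) ⬝ᵥ (C *ᵥ v)) / 4) := by
    intro v
    simp only [hF, toLin'_apply]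
    rw [dot_symm hC, mv_inv hC]
  constructor
  · have : Integrable F (Measure.map (toLin' C) volume) := by
      rw [hmap]; exact hi.smul_measure ENNReal.ofReal_ne_top
    have := this.comp_measurable hcont.measurable
    exact this.congr (Filter.Eventually.of_forall hcomp)
  · have h1 := integral_map (μ := (volume : Measure (Fin d → ℝ))) hcont.aemeasurable
      (hFc.aestronglyMeasurable (μ := Measure.map (toLin' C) volume))
    rw [hmap, integral_smul_measure, hI] at h1
    simp only [hcomp] at h1
    rw [← h1, ENNReal.toReal_ofReal (abs_nonneg _), abs_of_pos (inv_pos.2 hdet), smul_eq_mul]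
    rw [mul_inv_cancel_left₀ hdet.ne']

lemma sum_trig {ι : Type*} (s : Finset ι) (b θ : ι → ℝ) :
    ∑ i ∈ s, ∑ j ∈ s, b i * b j * Real.cos (θ i - θ j) =
      (∑ i ∈ s, b i * Real.cos (θ i)) ^ 2 + (∑ i ∈ s, b i * Real.sin (θ i)) ^ 2 := by
  rw [pow_two, pow_two, Finset.sum_mul_sum, Finset.sum_mul_sum, ← Finset.sum_add_distrib]
  refine Finset.sum_congr rfl fun i _ => ?_
  rw [← Finset.sum_add_distrib]
  refine Finset.sum_congr rfl fun j _ => ?_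
  rw [Real.cos_sub]; ring

open MeasureTheory in
lemma gram_ft {d : ℕ} {C : Matrix (Fin d) (Fin d) ℝ} (hC : C.PosDef)
    (H : RKHSFor d (gaussKer C)) {ι : Type*} (s : Finset ι) (b : ι → ℝ) (x : ι → Fin d → ℝ) :
    Integrable (fun v : Fin d → ℝ => ((∑ i ∈ s, b i * Real.cos (x i ⬝ᵥ v)) ^ 2 +
      (∑ i ∈ s, b i * Real.sin (x i ⬝ᵥ v)) ^ 2) *
      Real.exp (-((C *ᵥ v) ⬝ᵥ (C *ᵥ v)) / 4)) ∧
    (4 * Real.pi) ^ ((d : ℝ) / 2) * ‖∑ i ∈ s, b i • H.kx (x i)‖ ^ 2 =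
    C.det * ∫ v : Fin d → ℝ, ((∑ i ∈ s, b i * Real.cos (x i ⬝ᵥ v)) ^ 2 +
      (∑ i ∈ s, b i * Real.sin (x i ⬝ᵥ v)) ^ 2) *
      Real.exp (-((C *ᵥ v) ⬝ᵥ (C *ᵥ v)) / 4) := by
  have e : ∀ v : Fin d → ℝ, ((∑ i ∈ s, b i * Real.cos (x i ⬝ᵥ v)) ^ 2 +
      (∑ i ∈ s, b i * Real.sin (x i ⬝ᵥ v)) ^ 2) *
      Real.exp (-((C *ᵥ v) ⬝ᵥ (C *ᵥ v)) / 4) = ∑ i ∈ s, ∑ j ∈ s, b i * b j *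
      (Real.cos ((x i - x j) ⬝ᵥ v) * Real.exp (-((C *ᵥ v) ⬝ᵥ (C *ᵥ v)) / 4)) := by
    intro v
    rw [← sum_trig, Finset.sum_mul]
    refine Finset.sum_congr rfl fun i _ => ?_
    rw [Finset.sum_mul]
    refine Finset.sum_congr rfl fun j _ => ?_
    rw [sub_dotProduct]; ring
  have hi : ∀ i j, Integrable (fun v : Fin d → ℝ => b i * b j *
      (Real.cos ((x i - x j) ⬝ᵥ v) * Real.exp (-((C *ᵥ v) ⬝ᵥ (C *ᵥ v)) / 4))) :=
    fun i j => (mat_ft hC (x i - x j)).1.const_mul _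
  simp only [e]
  refine ⟨integrable_finsetSum _ fun i _ => integrable_finsetSum _ fun j _ => hi i j, ?_⟩
  rw [norm_sq_sum, integral_finsetSum _ fun i _ => integrable_finsetSum _ fun j _ => hi i j,
    Finset.mul_sum, Finset.mul_sum]
  refine Finset.sum_congr rfl fun i _ => ?_
  rw [integral_finsetSum _ fun j _ => hi i j, Finset.mul_sum, Finset.mul_sum]
  refine Finset.sum_congr rfl fun j _ => ?_
  rw [integral_const_mul, mul_left_comm, mul_left_comm C.det, (mat_ft hC (x i - x j)).2,
    gaussKer_eq hC]

open MeasureTheory in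
lemma dom_of_loewner {d : ℕ} {C₁ C₂ : Matrix (Fin d) (Fin d) ℝ} (h₁ : C₁.PosDef)
    (h₂ : C₂.PosDef) (H₁ : RKHSFor d (gaussKer C₁)) (H₂ : RKHSFor d (gaussKer C₂))
    (h : (C₁ ^ 2 - C₂ ^ 2).PosSemidef) {ι : Type*} (s : Finset ι) (b : ι → ℝ)
    (x : ι → Fin d → ℝ) :
    ‖∑ i ∈ s, b i • H₁.kx (x i)‖ ≤
      Real.sqrt (C₁.det / C₂.det) * ‖∑ i ∈ s, b i • H₂.kx (x i)‖ := by
  rw [posSemidef_iff' h₁ h₂] at h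
  obtain ⟨i1, e1⟩ := gram_ft h₁ H₁ s b x
  obtain ⟨i2, e2⟩ := gram_ft h₂ H₂ s b x
  have d1 := h₁.det_pos
  have d2 := h₂.det_pos
  refine le_of_sq_le_sq ?_ (by positivity)
  rw [mul_pow, Real.sq_sqrt (by positivity)]
  have hκ : (0 : ℝ) < (4 * Real.pi) ^ ((d : ℝ) / 2) := by positivity
  refine le_of_mul_le_mul_left ?_ hκ
  rw [mul_left_comm, e1, e2, ← mul_assoc, div_mul_cancel₀ _ d2.ne']
  refine mul_le_mul_of_nonneg_left (integral_mono i1 i2 fun v => ?_) d1.le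
  have := h v
  dsimp only
  gcongr

open MeasureTheory in
lemma ft1 (t : ℝ) :
    Integrable (fun ξ : ℝ => Real.cos (t * ξ) * Real.exp (-(1 / 4) * ξ ^ 2)) ∧
    ∫ ξ : ℝ, Real.cos (t * ξ) * Real.exp (-(1 / 4) * ξ ^ 2) =
      Real.sqrt (4 * Real.pi) * Real.exp (-t ^ 2) := by
  obtain ⟨h1, h2⟩ := mat_ft (d := 1) PosDef.one (fun _ => t)
  have hi : Integrable (fun ξ : ℝ => Real.cos (t * ξ) * Real.exp (-(1 / 4) * ξ ^ 2)) := by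
    refine (integrable_exp_neg_mul_sq (b := 1 / 4) (by norm_num)).mono'
      (Continuous.aestronglyMeasurable (by fun_prop)) (Filter.Eventually.of_forall fun ξ => ?_)
    rw [norm_mul, Real.norm_eq_abs, Real.norm_eq_abs, Real.abs_exp]
    exact mul_le_of_le_one_left (Real.exp_pos _).le (Real.abs_cos_le_one _)
  refine ⟨hi, ?_⟩
  have h3 := (volume_preserving_funUnique (Fin 1) ℝ).integral_comp'
    (fun ξ : ℝ => Real.cos (t * ξ) * Real.exp (-(1 / 4) * ξ ^ 2))
  rw [← h3]
  rw [Real.sqrt_eq_rpow]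
  simp [dotProduct] at h2
  rw [one_div 2, pow_two t, ← h2]
  congr 1
  ext v
  simp [pow_two]
  left
  ring

lemma binom_trig (n : ℕ) (θ : ℝ) :
    (∑ j ∈ Finset.range (n + 1), ((-1) ^ j * (n.choose j : ℝ)) * Real.cos (j * θ)) ^ 2 +
    (∑ j ∈ Finset.range (n + 1), ((-1) ^ j * (n.choose j : ℝ)) * Real.sin (j * θ)) ^ 2 =
    (2 - 2 * Real.cos θ) ^ n := by
  have h : ((1 : ℂ) - Complex.exp (θ * Complex.I)) ^ n =
      ((∑ j ∈ Finset.range (n + 1), ((-1) ^ j * (n.choose j : ℝ)) * Real.cos (j * θ) : ℝ) : ℂ) +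
      ((∑ j ∈ Finset.range (n + 1), ((-1) ^ j * (n.choose j : ℝ)) * Real.sin (j * θ) : ℝ) : ℂ)
        * Complex.I := by
    rw [sub_eq_neg_add, add_pow]
    push_cast
    rw [Finset.sum_mul, ← Finset.sum_add_distrib]
    refine Finset.sum_congr rfl fun j _ => ?_
    rw [neg_pow, ← Complex.exp_nat_mul, ← mul_assoc, Complex.exp_mul_I]
    ring
  have h2 := congrArg Complex.normSq h
  rw [Complex.normSq_add_mul_I, map_pow] at h2
  rw [← h2]
  congr 1
  rw [Complex.exp_mul_I, ← Complex.ofReal_cos, ← Complex.ofReal_sin, Complex.normSq_apply]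
  simp only [Complex.sub_re, Complex.one_re, Complex.add_re, Complex.ofReal_re, Complex.mul_re,
    Complex.I_re, Complex.I_im, Complex.ofReal_im, Complex.sub_im, Complex.one_im, Complex.add_im,
    Complex.mul_im]
  nlinarith [Real.sin_sq_add_cos_sq θ]

lemma cos_sinc (h y : ℝ) :
    2 - 2 * Real.cos (h * y) = h ^ 2 * (y * Real.sinc (h * y / 2)) ^ 2 := by
  have e : Real.cos (h * y) = 1 - 2 * Real.sin (h * y / 2) ^ 2 := by
    have e1 : h * y = 2 * (h * y / 2) := by ring
    conv_lhs => rw [e1, Real.cos_two_mul]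
    linarith [Real.sin_sq_add_cos_sq (h * y / 2)]
  rw [e]
  by_cases h0 : h * y / 2 = 0
  · have : h * y = 0 := by linarith
    rw [← mul_pow, ← mul_assoc, this]; simp
  · rw [Real.sinc_of_ne_zero h0]
    have h1 : h ≠ 0 := by rintro rfl; simp at h0
    have h2 : y ≠ 0 := by rintro rfl; simp at h0
    field_simp
    ring

noncomputable def gG (n : ℕ) (r h : ℝ) : ℝ :=
  ∫ ξ : ℝ, ((r * ξ * Real.sinc (h * (r * ξ) / 2)) ^ 2) ^ n * Real.exp (-(1 / 4) * ξ ^ 2)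

open MeasureTheory in
lemma int_mom (n : ℕ) : Integrable fun ξ : ℝ => (ξ ^ 2) ^ n * Real.exp (-(1 / 4) * ξ ^ 2) := by
  have := integrable_rpow_mul_exp_neg_mul_sq (b := 1 / 4) (by norm_num) (s := ((2 * n : ℕ) : ℝ))
    (by have : (0:ℝ) ≤ ((2 * n : ℕ) : ℝ) := Nat.cast_nonneg _
        linarith)
  simpa only [Real.rpow_natCast, pow_mul] using this

open MeasureTheory in
lemma gG_cont (n : ℕ) (r : ℝ) : Continuous (gG n r) := by
  unfold gG
  refine continuous_of_dominated
    (bound := fun ξ => (r ^ 2) ^ n * ((ξ ^ 2) ^ n * Real.exp (-(1 / 4) * ξ ^ 2))) ?_ ?_ ?_ ?_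
  · intro h
    have := Real.continuous_sinc
    exact Continuous.aestronglyMeasurable (by fun_prop)
  · intro h
    refine Filter.Eventually.of_forall fun ξ => ?_
    rw [Real.norm_of_nonneg (by positivity), ← mul_assoc ((r ^ 2) ^ n), ← mul_pow, ← mul_pow]
    have h1 : Real.sinc (h * (r * ξ) / 2) ^ 2 ≤ 1 := by
      rw [sq_le_one_iff_abs_le_one, abs_le]
      exact ⟨Real.neg_one_le_sinc _, Real.sinc_le_one _⟩
    have h2 : (r * ξ * Real.sinc (h * (r * ξ) / 2)) ^ 2 ≤ (r * ξ) ^ 2 := by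
      rw [mul_pow _ (Real.sinc _)]
      exact mul_le_of_le_one_right (by positivity) h1
    exact mul_le_mul_of_nonneg_right (pow_le_pow_left₀ (sq_nonneg _) h2 n) (Real.exp_pos _).le
  · exact (int_mom n).const_mul _
  · refine Filter.Eventually.of_forall fun ξ => ?_
    have := Real.continuous_sinc
    fun_prop

open MeasureTheory in
lemma gG_zero (n : ℕ) (r : ℝ) : gG n r 0 =
    (r ^ 2) ^ n * ∫ ξ : ℝ, (ξ ^ 2) ^ n * Real.exp (-(1 / 4) * ξ ^ 2) := by
  rw [gG, ← integral_const_mul]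
  congr 1
  ext ξ
  simp [mul_pow, mul_assoc]

open MeasureTheory in
lemma mom_pos (n : ℕ) : 0 < ∫ ξ : ℝ, (ξ ^ 2) ^ n * Real.exp (-(1 / 4) * ξ ^ 2) := by
  refine integral_pos_of_integrable_nonneg_nonzero (x := 1) (by fun_prop) (int_mom n)
    (fun ξ => by positivity) (by positivity)

open MeasureTheory in
lemma line_gram {d : ℕ} {C : Matrix (Fin d) (Fin d) ℝ} (hC : C.PosDef)
    (H : RKHSFor d (gaussKer C)) (n : ℕ) (h : ℝ) (v : Fin d → ℝ) :
    Real.sqrt (4 * Real.pi) * ‖∑ j ∈ Finset.range (n + 1), ((-1) ^ j * (n.choose j : ℝ)) •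
      H.kx ((h * (j : ℝ)) • v)‖ ^ 2 =
      (h ^ 2) ^ n * gG n (Real.sqrt ((C⁻¹ *ᵥ v) ⬝ᵥ (C⁻¹ *ᵥ v))) h := by
  set r := Real.sqrt ((C⁻¹ *ᵥ v) ⬝ᵥ (C⁻¹ *ᵥ v)) with hr
  have hr2 : r ^ 2 = (C⁻¹ *ᵥ v) ⬝ᵥ (C⁻¹ *ᵥ v) :=
    Real.sq_sqrt (by simpa using dotProduct_star_self_nonneg (C⁻¹ *ᵥ v))
  have hk : ∀ i j : ℕ, gaussKer C ((h * (i : ℝ)) • v) ((h * (j : ℝ)) • v) =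
      Real.exp (-(i * (h * r) - j * (h * r)) ^ 2) := by
    intro i j
    rw [gaussKer_eq hC, ← sub_smul, mulVec_smul, smul_dotProduct, dotProduct_smul, ← hr2]
    congr 1
    simp only [smul_eq_mul]
    ring
  set b : ℕ → ℝ := fun j => (-1) ^ j * (n.choose j : ℝ) with hb
  have hns := norm_sq_sum H (Finset.range (n + 1)) b (fun j : ℕ => (h * (j : ℝ)) • v)
  simp only [hb] at hns
  rw [hns, gG, ← integral_const_mul]
  have e : ∀ ξ : ℝ, (h ^ 2) ^ n * (((r * ξ * Real.sinc (h * (r * ξ) / 2)) ^ 2) ^ n *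
      Real.exp (-(1 / 4) * ξ ^ 2)) =
      ∑ i ∈ Finset.range (n + 1), ∑ j ∈ Finset.range (n + 1), b i * b j *
      (Real.cos ((i * (h * r) - j * (h * r)) * ξ) * Real.exp (-(1 / 4) * ξ ^ 2)) := by
    intro ξ
    rw [← mul_assoc, ← mul_pow, ← cos_sinc, ← binom_trig,
      ← sum_trig (Finset.range (n + 1)) b (fun j : ℕ => (j : ℝ) * (h * (r * ξ))), Finset.sum_mul]
    refine Finset.sum_congr rfl fun i _ => ?_
    rw [Finset.sum_mul]
    refine Finset.sum_congr rfl fun j _ => ?_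
    rw [mul_assoc (b i * b j)]
    congr 3
    ring
  simp only [e]
  have hi : ∀ i j : ℕ, Integrable (fun ξ : ℝ => b i * b j *
      (Real.cos ((i * (h * r) - j * (h * r)) * ξ) * Real.exp (-(1 / 4) * ξ ^ 2))) :=
    fun i j => (ft1 _).1.const_mul _
  rw [integral_finsetSum _ fun i _ => integrable_finsetSum _ fun j _ => hi i j, Finset.mul_sum]
  refine Finset.sum_congr rfl fun i _ => ?_
  rw [integral_finsetSum _ fun j _ => hi i j, Finset.mul_sum]
  refine Finset.sum_congr rfl fun j _ => ?_
  rw [integral_const_mul, (ft1 _).2, hk]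
  simp only [hb]
  ring

lemma loewner_of_dom {d : ℕ} {C₁ C₂ : Matrix (Fin d) (Fin d) ℝ} (h₁ : C₁.PosDef)
    (h₂ : C₂.PosDef) (H₁ : RKHSFor d (gaussKer C₁)) (H₂ : RKHSFor d (gaussKer C₂))
    (c : ℝ)
    (h : ∀ (s : Finset ℕ) (b : ℕ → ℝ) (x : ℕ → Fin d → ℝ),
      ‖∑ i ∈ s, b i • H₁.kx (x i)‖ ≤ c * ‖∑ i ∈ s, b i • H₂.kx (x i)‖) :
    (C₁ ^ 2 - C₂ ^ 2).PosSemidef := by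
  apply loewner_of_inv h₁ h₂
  intro v
  have nn : ∀ C : Matrix (Fin d) (Fin d) ℝ, 0 ≤ (C⁻¹ *ᵥ v) ⬝ᵥ (C⁻¹ *ᵥ v) := fun C => by
    simpa using dotProduct_star_self_nonneg (C⁻¹ *ᵥ v)
  have key : ∀ n : ℕ, ((C₁⁻¹ *ᵥ v) ⬝ᵥ (C₁⁻¹ *ᵥ v)) ^ n ≤
      c ^ 2 * ((C₂⁻¹ *ᵥ v) ⬝ᵥ (C₂⁻¹ *ᵥ v)) ^ n := by
    intro n
    have g : ∀ t : ℝ, t ≠ 0 → gG n (Real.sqrt ((C₁⁻¹ *ᵥ v) ⬝ᵥ (C₁⁻¹ *ᵥ v))) t ≤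
        c ^ 2 * gG n (Real.sqrt ((C₂⁻¹ *ᵥ v) ⬝ᵥ (C₂⁻¹ *ᵥ v))) t := by
      intro t ht
      have ht' : 0 < (t ^ 2) ^ n := by positivity
      refine le_of_mul_le_mul_left ?_ ht'
      rw [mul_left_comm, ← line_gram h₁ H₁, ← line_gram h₂ H₂, mul_left_comm, ← mul_pow]
      have := h (Finset.range (n + 1)) (fun j => (-1) ^ j * (n.choose j : ℝ))
        (fun j => (t * (j : ℝ)) • v)
      gcongr
    have lim := le_of_tendsto_of_tendsto
      (((gG_cont n (Real.sqrt ((C₁⁻¹ *ᵥ v) ⬝ᵥ (C₁⁻¹ *ᵥ v)))).tendsto 0).mono_left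
        (nhdsWithin_le_nhds (s := {0}ᶜ)))
      ((((gG_cont n (Real.sqrt ((C₂⁻¹ *ᵥ v) ⬝ᵥ (C₂⁻¹ *ᵥ v)))).tendsto 0).const_mul (c ^ 2)).mono_left
        (nhdsWithin_le_nhds (s := {0}ᶜ)))
      (Filter.eventually_of_mem self_mem_nhdsWithin fun t ht => g t ht)
    rw [gG_zero, gG_zero, Real.sq_sqrt (nn _), Real.sq_sqrt (nn _), ← mul_assoc] at lim
    exact le_of_mul_le_mul_right lim (mom_pos n)
  by_contra! hlt
  rcases (nn C₂).eq_or_lt with h0 | h0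
  · have := key 1
    rw [← h0] at this hlt
    simp at this
    linarith
  · obtain ⟨n, hn⟩ := pow_unbounded_of_one_lt (c ^ 2) ((one_lt_div h0).2 hlt)
    have := key n
    rw [div_pow, lt_div_iff₀ (by positivity)] at hn
    linarith

theorem gaussian_RKHS_inclusion_iff {d : ℕ} (C₁ C₂ : Matrix (Fin d) (Fin d) ℝ)
    (hC₁ : C₁.PosDef) (hC₂ : C₂.PosDef)
    (H₁ : RKHSFor d (gaussKer C₁)) (H₂ : RKHSFor d (gaussKer C₂)) :
    (Set.range H₁.toFun ⊆ Set.range H₂.toFun ↔ (C₁ ^ 2 - C₂ ^ 2).PosSemidef) ∧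
    ((C₁ ^ 2 - C₂ ^ 2).PosSemidef → ∀ f : H₁.H, ∃ g : H₂.H,
      H₂.toFun g = H₁.toFun f ∧
      H₂.norm' g ≤ Real.sqrt (C₁.det / C₂.det) * H₁.norm' f) := by
  have main : (C₁ ^ 2 - C₂ ^ 2).PosSemidef → ∀ f : H₁.H, ∃ g : H₂.H,
      H₂.toFun g = H₁.toFun f ∧
      H₂.norm' g ≤ Real.sqrt (C₁.det / C₂.det) * H₁.norm' f := fun h f =>
    ext_of_dom H₁ H₂ _ (Real.sqrt_nonneg _)
      (fun a => by
        simp only [Finsupp.linearCombination_apply, Finsupp.sum]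
        exact dom_of_loewner hC₁ hC₂ H₁ H₂ h a.support a (fun x => x)) f
  refine ⟨⟨fun h => ?_, fun h => ?_⟩, main⟩
  · obtain ⟨c, -, hd⟩ := dom_of_incl H₁ H₂ h
    exact loewner_of_dom hC₁ hC₂ H₁ H₂ c hd
  · rintro _ ⟨f, rfl⟩
    obtain ⟨g, hg, -⟩ := main h f
    exact ⟨g, hg⟩
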